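/- Fix orders q = (q_1,…,q_d) and, in each direction k, a knot sequence with N_k interior knots (J_k = N_k + q_k). There is a constant c ∈ (0,1] depending only on q and d such that for every coefficient array θ = (θ_j) indexed by multi-indices 1 ≤ j_k ≤ J_k, the tensor-product spline f(x) = Σ_j θ_j ∏_{k=1}^d B_{j_k,q_k}(x_k) satisfies c Σ_j θ_j² ∏_{k=1}^d (t_{k,j_k} − t_{k,j_k−q_k}) ≤ ∫_{[0,1]^d} f(x)² dx ≤ Σ_j θ_j² ∏_{k=1}^d (t_{k,j_k} − t_{k,j_k−q_k}). -/

import Mathlib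

open MeasureTheory

/-- A knot sequence `0 = t 0 < t 1 < ⋯ < t N < t (N+1) = 1` on `[0,1]` with `N` interior
knots. -/
structure KnotSeq where
  N : ℕ
  t : ℕ → ℝ
  t0 : t 0 = 0
  tN : t (N + 1) = 1
  mono : ∀ l, l < N + 1 → t l < t (l + 1)

namespace KnotSeq

/-- The extended knot sequence: the boundary knots `0` and `1` are repeated. -/
noncomputable def T (ks : KnotSeq) (l : ℤ) : ℝ :=
  if l ≤ 0 then 0 else if (ks.N + 1 : ℤ) ≤ l then 1 else ks.t l.toNat

/-- The mesh size `Δ = max_{1 ≤ l ≤ N+1} (t l − t (l−1))`. -/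
noncomputable def mesh (ks : KnotSeq) : ℝ :=
  (Finset.Icc 1 (ks.N + 1)).sup' (Finset.nonempty_Icc.mpr (by omega))
    fun l => ks.t l - ks.t (l - 1)

/-- Quasi-uniformity with constant `C₀`: the mesh size is at most `C₀` times every
spacing. -/
def QuasiUniform (ks : KnotSeq) (C₀ : ℝ) : Prop :=
  ∀ l ∈ Finset.Icc 1 (ks.N + 1), ks.mesh ≤ C₀ * (ks.t l - ks.t (l - 1))

end KnotSeq

/-- The normalized B-spline `B_{j,m}` of order `m` for the extended knot sequence `T`,
defined by the Cox–de Boor recursion.  `B_{j,1}` is the indicator of `[T (j−1), T j)`,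
also including the point `1` when `T j = 1 > T (j−1)`; for orders `≥ 2` the recursion is
`B_{j,m}(x) = ((x − T(j−m))/(T(j−1) − T(j−m))) B_{j−1,m−1}(x)
  + ((T j − x)/(T j − T(j−m+1))) B_{j,m−1}(x)`,
a term with zero denominator being zero (Lean's division-by-zero convention). -/
noncomputable def Bspl (T : ℤ → ℝ) : ℕ → ℤ → ℝ → ℝ
  | 0, _, _ => 0
  | 1, j, x =>
      if T (j - 1) ≤ x ∧ (x < T j ∨ (x = 1 ∧ T j = 1 ∧ T (j - 1) < 1)) then 1 else 0
  | m + 2, j, x =>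
      (x - T (j - (m + 2))) / (T (j - 1) - T (j - (m + 2))) * Bspl T (m + 1) (j - 1) x
        + (T j - x) / (T j - T (j - (m + 1))) * Bspl T (m + 1) j x

/-!
The upper bound is the Cauchy–Schwarz inequality for the weights `B_j`, which sum to at most `1` and
have integral at most the length of their support.

The lower bound is by duality. Let `w_j` be the length of the support of `B_j`, and let `H_j`
satisfy `∫ B_i H_j = κ w_j δ_ij` and `|H_j| ≤ 1` on that support, `H_j = 0` outside. As at most `q`
supports overlap, `‖Σ θ_j H_j‖² ≤ q Σ θ_j² w_j`, so pairing `Σ θ_j B_j` with `Σ θ_j H_j` bounds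
`‖Σ θ_j B_j‖²` from below by `κ² / q · Σ θ_j² w_j`.

To find `H_j`, pick a knot interval of at least average length in the support of `B_j`. On it the
coefficient of `B_j` in a spline is the blossom of its polynomial piece at the knots inside the
support. After the interval is rescaled to `[0, 1]` these knots are at most `q` in absolute value,
so that this functional is represented by a polynomial bounded on `[0, 1]` by a constant depending
only on `q`.

Both properties of the families `B` and `H` pass to tensor products.
-/

section Stability

variable {X J : Type*} [MeasurableSpace X] {ν : Measure X}

/-- Nonnegative integrable functions every finite subfamily of which sums to at most `Q` almost
everywhere, such as a partition of unity (`Q = 1`) or the indicators of sets that overlap at most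
`Q` times. -/
structure HasBoundedOverlap (ν : Measure X) (b : J → X → ℝ) (Q : ℝ) : Prop where
  integrable : ∀ j, Integrable (b j) ν
  nonneg : ∀ j x, 0 ≤ b j x
  sum_le : ∀ᵐ x ∂ν, ∀ s : Finset J, ∑ j ∈ s, b j x ≤ Q

/-- The families `B` and `H` are dual to each other with respect to the `L²(ν)` pairing, up to the
normalization `∫ B j * H j = w j`. -/
structure IsBiorthogonal (ν : Measure X) (B H : J → X → ℝ) (w : J → ℝ) : Prop where
  integral_mul_self : ∀ j, ∫ x, B j x * H j x ∂ν = w j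
  integral_mul_of_ne : ∀ i j, i ≠ j → ∫ x, B i x * H j x ∂ν = 0

namespace HasBoundedOverlap

variable {b : J → X → ℝ} {Q : ℝ}

theorem comp_injective (hb : HasBoundedOverlap ν b Q) {J' : Type*} {m : J' → J}
    (hm : Function.Injective m) : HasBoundedOverlap ν (fun j => b (m j)) Q where
  integrable j := hb.integrable (m j)
  nonneg j := hb.nonneg (m j)
  sum_le := by
    filter_upwards [hb.sum_le] with x hx s
    simpa only [Finset.sum_map, Function.Embedding.coeFn_mk] using hx (s.map ⟨m, hm⟩)

theorem ae_le (hb : HasBoundedOverlap ν b Q) (j : J) : ∀ᵐ x ∂ν, b j x ≤ Q := by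
  filter_upwards [hb.sum_le] with x hx
  simpa only [Finset.sum_singleton] using hx {j}

theorem memLp_two_of_abs_le (hb : HasBoundedOverlap ν b Q) {j : J} {f : X → ℝ}
    (hf : AEStronglyMeasurable f ν) (hfb : ∀ x, |f x| ≤ b j x) : MemLp f 2 ν := by
  refine (memLp_two_iff_integrable_sq hf).2
    (((hb.integrable j).const_mul Q).mono' (hf.pow 2) ?_)
  filter_upwards [hb.ae_le j] with x hx
  calc ‖f x ^ 2‖ = |f x| ^ 2 := by rw [Real.norm_eq_abs, abs_pow]
    _ ≤ b j x ^ 2 := pow_le_pow_left₀ (abs_nonneg _) (hfb x) 2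
    _ ≤ Q * b j x := by rw [sq]; exact mul_le_mul_of_nonneg_right hx (hb.nonneg j x)

theorem integral_sq_sum_le (hb : HasBoundedOverlap ν b Q) {f : J → X → ℝ}
    (hfb : ∀ j x, |f j x| ≤ b j x) {w : J → ℝ} (hw : ∀ j, ∫ x, b j x ∂ν ≤ w j)
    (hQ : 0 ≤ Q) (s : Finset J) (θ : J → ℝ) :
    ∫ x, (∑ j ∈ s, θ j * f j x) ^ 2 ∂ν ≤ Q * ∑ j ∈ s, θ j ^ 2 * w j := by
  have hsum_nonneg : ∀ x, 0 ≤ ∑ j ∈ s, θ j ^ 2 * b j x := fun x =>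
    Finset.sum_nonneg fun j _ => mul_nonneg (sq_nonneg _) (hb.nonneg j x)
  have hint : ∀ j ∈ s, Integrable (fun x => θ j ^ 2 * b j x) ν := fun j _ =>
    (hb.integrable j).const_mul _
  have cauchy_schwarz : ∀ x, (∑ j ∈ s, θ j * f j x) ^ 2 ≤
      (∑ j ∈ s, b j x) * ∑ j ∈ s, θ j ^ 2 * b j x := fun x => by
    refine Finset.sum_sq_le_sum_mul_sum_of_sq_le_mul s (fun j _ => hb.nonneg j x)
      (fun j _ => mul_nonneg (sq_nonneg _) (hb.nonneg j x)) fun j _ => ?_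
    calc (θ j * f j x) ^ 2 = θ j ^ 2 * f j x ^ 2 := mul_pow ..
      _ ≤ θ j ^ 2 * b j x ^ 2 := by
        gcongr θ j ^ 2 * ?_
        exact sq_le_sq.2 ((hfb j x).trans (le_abs_self _))
      _ = b j x * (θ j ^ 2 * b j x) := by ring
  calc ∫ x, (∑ j ∈ s, θ j * f j x) ^ 2 ∂ν
      ≤ ∫ x, Q * ∑ j ∈ s, θ j ^ 2 * b j x ∂ν := by
        refine integral_mono_of_nonneg (ae_of_all _ fun x => sq_nonneg _)
          ((integrable_finsetSum s hint).const_mul Q) ?_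
        filter_upwards [hb.sum_le] with x hx
        exact (cauchy_schwarz x).trans (mul_le_mul_of_nonneg_right (hx s) (hsum_nonneg x))
    _ = Q * ∑ j ∈ s, θ j ^ 2 * ∫ x, b j x ∂ν := by
        simp only [integral_const_mul, integral_finsetSum s hint]
    _ ≤ Q * ∑ j ∈ s, θ j ^ 2 * w j := by gcongr with j; exact hw j

end HasBoundedOverlap

namespace IsBiorthogonal

variable {B H : J → X → ℝ} {w : J → ℝ}

theorem comp_injective (h : IsBiorthogonal ν B H w) {J' : Type*} {m : J' → J}
    (hm : Function.Injective m) :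
    IsBiorthogonal ν (fun j => B (m j)) (fun j => H (m j)) (fun j => w (m j)) where
  integral_mul_self j := h.integral_mul_self (m j)
  integral_mul_of_ne i j hij := h.integral_mul_of_ne (m i) (m j) (hm.ne hij)

theorem integral_sum_mul_sum (h : IsBiorthogonal ν B H w)
    (hB : ∀ j, MemLp (B j) 2 ν) (hH : ∀ j, MemLp (H j) 2 ν) (s : Finset J) (θ η : J → ℝ) :
    ∫ x, (∑ j ∈ s, θ j * B j x) * ∑ j ∈ s, η j * H j x ∂ν = ∑ j ∈ s, θ j * η j * w j := by
  have hint : ∀ i j, Integrable (fun x => θ i * η j * (B i x * H j x)) ν := fun i j =>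
    ((hB i).integrable_mul (hH j)).const_mul _
  calc ∫ x, (∑ j ∈ s, θ j * B j x) * ∑ j ∈ s, η j * H j x ∂ν
      = ∫ x, ∑ i ∈ s, ∑ j ∈ s, θ i * η j * (B i x * H j x) ∂ν := by
        simp only [Finset.sum_mul_sum, mul_mul_mul_comm]
    _ = ∑ i ∈ s, ∑ j ∈ s, θ i * η j * ∫ x, B i x * H j x ∂ν := by
        rw [integral_finsetSum s fun i _ => integrable_finsetSum s fun j _ => hint i j]
        simp only [integral_finsetSum s fun j _ => hint _ j, integral_const_mul]
    _ = ∑ j ∈ s, θ j * η j * w j := by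
        refine Finset.sum_congr rfl fun i hi => ?_
        rw [Finset.sum_eq_single_of_mem i hi fun j _ hji => by
          rw [h.integral_mul_of_ne i j hji.symm, mul_zero], h.integral_mul_self]

theorem sq_mul_sum_le {b : J → X → ℝ} {Q κ : ℝ}
    (h : IsBiorthogonal ν B H fun j => κ * w j) (hb : HasBoundedOverlap ν b Q)
    (hB : ∀ j, MemLp (B j) 2 ν) (hH : ∀ j, AEStronglyMeasurable (H j) ν)
    (hHb : ∀ j x, |H j x| ≤ b j x) (hw : ∀ j, ∫ x, b j x ∂ν ≤ w j) (hQ : 0 < Q)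
    (s : Finset J) (θ : J → ℝ) :
    κ ^ 2 * ∑ j ∈ s, θ j ^ 2 * w j ≤ Q * ∫ x, (∑ j ∈ s, θ j * B j x) ^ 2 ∂ν := by
  set S := ∑ j ∈ s, θ j ^ 2 * w j with hS
  set f := fun x => ∑ j ∈ s, θ j * B j x
  set p := fun x => ∑ j ∈ s, θ j * H j x
  have hH' : ∀ j, MemLp (H j) 2 ν := fun j => hb.memLp_two_of_abs_le (hH j) (hHb j)
  have hfL : MemLp f 2 ν := memLp_finsetSum s fun j _ => (hB j).const_mul (θ j)
  have hpL : MemLp p 2 ν := memLp_finsetSum s fun j _ => (hH' j).const_mul (θ j)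
  have hfp : ∫ x, f x * p x ∂ν = κ * S := by
    rw [h.integral_sum_mul_sum hB hH' s θ θ, hS, Finset.mul_sum]
    exact Finset.sum_congr rfl fun j _ => by ring
  have hpp : ∫ x, p x ^ 2 ∂ν ≤ Q * S := hb.integral_sq_sum_le hHb hw hQ.le s θ
  have am_gm : 2 * κ * Q * ∫ x, f x * p x ∂ν ≤
      Q ^ 2 * ∫ x, f x ^ 2 ∂ν + κ ^ 2 * ∫ x, p x ^ 2 ∂ν := by
    have hf2 := hfL.integrable_sq.const_mul (Q ^ 2)
    have hp2 := hpL.integrable_sq.const_mul (κ ^ 2)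
    simp only [← integral_const_mul]
    rw [← integral_add hf2 hp2]
    refine integral_mono ((hfL.integrable_mul hpL).const_mul _) (hf2.add hp2) fun x => ?_
    dsimp only [Pi.mul_apply]
    linarith [sq_nonneg (Q * f x - κ * p x)]
  rw [hfp] at am_gm
  have hQ_mul : Q * (κ ^ 2 * S) ≤ Q * (Q * ∫ x, f x ^ 2 ∂ν) := by
    linarith [mul_le_mul_of_nonneg_left hpp (sq_nonneg κ)]
  exact le_of_mul_le_mul_left hQ_mul hQ

end IsBiorthogonal

end Stability

section Tensor

variable {ι : Type*} [Fintype ι] {X J : ι → Type*} [∀ k, MeasurableSpace (X k)]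
  {ν : ∀ k, Measure (X k)} [∀ k, SigmaFinite (ν k)]

theorem HasBoundedOverlap.pi {b : ∀ k, J k → X k → ℝ} {Q : ι → ℝ}
    (hb : ∀ k, HasBoundedOverlap (ν k) (b k) (Q k)) :
    HasBoundedOverlap (Measure.pi ν) (fun (j : ∀ k, J k) x => ∏ k, b k (j k) (x k))
      (∏ k, Q k) where
  integrable j := Integrable.fintype_prod_dep fun k => (hb k).integrable (j k)
  nonneg j x := Finset.prod_nonneg fun k _ => (hb k).nonneg (j k) (x k)
  sum_le := by
    classical
    have hae : ∀ᵐ x ∂Measure.pi ν, ∀ k, ∀ s : Finset (J k), ∑ j ∈ s, b k j (x k) ≤ Q k :=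
      ae_all_iff.2 fun k => (Measure.quasiMeasurePreserving_eval ν k).ae (hb k).sum_le
    filter_upwards [hae] with x hx s
    let t : ∀ k, Finset (J k) := fun k => s.image fun j => j k
    have hst : s ⊆ Fintype.piFinset t := fun j hj =>
      Fintype.mem_piFinset.2 fun k => Finset.mem_image_of_mem _ hj
    calc ∑ j ∈ s, ∏ k, b k (j k) (x k)
        ≤ ∑ j ∈ Fintype.piFinset t, ∏ k, b k (j k) (x k) :=
          Finset.sum_le_sum_of_subset_of_nonneg hst fun j _ _ =>
            Finset.prod_nonneg fun k _ => (hb k).nonneg (j k) (x k)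
      _ = ∏ k, ∑ j ∈ t k, b k j (x k) := (Finset.prod_univ_sum t fun k j => b k j (x k)).symm
      _ ≤ ∏ k, Q k := Finset.prod_le_prod
          (fun k _ => Finset.sum_nonneg fun j _ => (hb k).nonneg j (x k)) fun k _ => hx k (t k)

theorem IsBiorthogonal.pi {B H : ∀ k, J k → X k → ℝ} {w : ∀ k, J k → ℝ}
    (h : ∀ k, IsBiorthogonal (ν k) (B k) (H k) (w k)) :
    IsBiorthogonal (Measure.pi ν) (fun (j : ∀ k, J k) x => ∏ k, B k (j k) (x k))
      (fun j x => ∏ k, H k (j k) (x k)) (fun j => ∏ k, w k (j k)) where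
  integral_mul_self j := by
    simp only [← Finset.prod_mul_distrib,
      integral_fintype_prod_eq_prod fun k y => B k (j k) y * H k (j k) y,
      (h _).integral_mul_self]
  integral_mul_of_ne i j hij := by
    obtain ⟨k, hk⟩ := Function.ne_iff.1 hij
    simp only [← Finset.prod_mul_distrib,
      integral_fintype_prod_eq_prod fun k y => B k (i k) y * H k (j k) y]
    exact Finset.prod_eq_zero (Finset.mem_univ k) ((h k).integral_mul_of_ne _ _ hk)

end Tensor

section Knots

variable {T : ℤ → ℝ}

theorem exists_knot_interval_ge_average (T : ℤ → ℝ) (i : ℤ) {q : ℕ} (hq : 1 ≤ q) :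
    ∃ l, l ≤ i ∧ i < l + q ∧ T i - T (i - q) ≤ q * (T l - T (l - 1)) := by
  have telescope : ∑ k ∈ Finset.range q, (T (i - k) - T (i - k - 1)) = T i - T (i - q) := by
    simpa [sub_sub] using Finset.sum_range_sub' (fun k : ℕ => T (i - k)) q
  obtain ⟨k, hk, hle⟩ := Finset.exists_le_of_sum_le (s := Finset.range q)
    (f := fun _ : ℕ => T i - T (i - q)) (g := fun k : ℕ => q * (T (i - k) - T (i - k - 1)))
    (Finset.nonempty_range_iff.2 (by omega))
    (by rw [← Finset.mul_sum, telescope, Finset.sum_const, Finset.card_range, nsmul_eq_mul])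
  have := Finset.mem_range.1 hk
  exact ⟨i - k, by omega, by omega, hle⟩

theorem sum_indicator_Ico_knots_le (hT : Monotone T) (q : ℕ) (x : ℝ) (s : Finset ℤ) :
    ∑ i ∈ s, (Set.Ico (T (i - q)) (T i)).indicator (1 : ℝ → ℝ) x ≤ q := by
  classical
  simp only [Set.indicator_apply, Pi.one_apply, Finset.sum_boole, Nat.cast_le]
  set t := {i ∈ s | x ∈ Set.Ico (T (i - q)) (T i)}
  rcases t.eq_empty_or_nonempty with h | h
  · simp [h]
  have hmin := (Finset.mem_filter.1 (t.min'_mem h)).2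
  have hsub : t ⊆ Finset.Ico (t.min' h) (t.min' h + q) := fun i hi => by
    have hlt := hT.reflect_lt ((Finset.mem_filter.1 hi).2.1.trans_lt hmin.2)
    exact Finset.mem_Ico.2 ⟨t.min'_le i hi, by omega⟩
  simpa using Finset.card_le_card hsub

theorem hasBoundedOverlap_indicator_Ico_knots (hT : Monotone T) (q : ℕ) :
    HasBoundedOverlap volume
      (fun i : ℤ => (Set.Ico (T (i - q)) (T i)).indicator (1 : ℝ → ℝ)) q where
  integrable i := (integrable_indicator_iff measurableSet_Ico).2 (integrableOn_const (by simp))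
  nonneg i x := Set.indicator_nonneg (fun _ _ => zero_le_one) x
  sum_le := ae_of_all _ fun x s => sum_indicator_Ico_knots_le hT q x s

theorem integral_indicator_Ico_knots (hT : Monotone T) (q : ℕ) (i : ℤ) :
    ∫ x, (Set.Ico (T (i - q)) (T i)).indicator (1 : ℝ → ℝ) x = T i - T (i - q) := by
  rw [integral_indicator_one measurableSet_Ico, Real.volume_real_Ico_of_le (hT (by omega))]

end Knots

namespace Bspl

variable {T : ℤ → ℝ}

/-- The share of `B_{j,m}` that the Cox–de Boor recursion passes on to `B_{j+1,m+1}`. -/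
noncomputable def rising (T : ℤ → ℝ) (m : ℕ) (j : ℤ) (x : ℝ) : ℝ :=
  (x - T (j - m)) / (T j - T (j - m)) * Bspl T m j x

/-- The share of `B_{j,m}` that the Cox–de Boor recursion passes on to `B_{j,m+1}`. -/
noncomputable def falling (T : ℤ → ℝ) (m : ℕ) (j : ℤ) (x : ℝ) : ℝ :=
  (T j - x) / (T j - T (j - m)) * Bspl T m j x

theorem eq_rising_add_falling (T : ℤ → ℝ) (m : ℕ) (j : ℤ) (x : ℝ) :
    Bspl T (m + 2) j x = rising T (m + 1) (j - 1) x + falling T (m + 1) j x := by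
  rw [Bspl, rising, falling, show j - 1 - ((m + 1 : ℕ) : ℤ) = j - (m + 2) by push_cast; ring]
  push_cast
  rfl

theorem measurable (T : ℤ → ℝ) : ∀ m j, Measurable (Bspl T m j)
  | 0, _ => measurable_const
  | 1, j => by
    refine Measurable.ite ?_ measurable_const measurable_const
    exact measurableSet_Ici.inter (measurableSet_Iio.union
      ((measurableSet_singleton 1).inter (MeasurableSet.const _)))
  | m + 2, j => by
    have h₁ := measurable T (m + 1) (j - 1)
    have h₂ := measurable T (m + 1) j
    rw [funext (eq_rising_add_falling T m j)]
    unfold rising falling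
    fun_prop

theorem eq_zero_of_notMem (hT : Monotone T) (x : ℝ) :
    ∀ (m : ℕ) (j : ℤ), x ∉ Set.Icc (T (j - m)) (T j) → Bspl T m j x = 0
  | 0, _, _ => rfl
  | 1, j, hx => by
    refine if_neg fun ⟨hl, hr⟩ => hx ⟨by simpa using hl, ?_⟩
    exact hr.elim le_of_lt fun ⟨hx1, hT1, _⟩ => (hx1.trans hT1.symm).le
  | m + 2, j, hx => by
    have vanish : ∀ i, j - 1 ≤ i → i ≤ j → Bspl T (m + 1) i x = 0 := fun i hi hij =>
      eq_zero_of_notMem hT x (m + 1) i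
        (mt (Set.Icc_subset_Icc (hT (by push_cast; omega)) (hT hij) ·) hx)
    rw [Bspl, vanish (j - 1) le_rfl (by omega), vanish j (by omega) le_rfl, mul_zero, mul_zero,
      add_zero]

theorem rising_nonneg (hT : Monotone T) {m : ℕ} {j : ℤ} {x : ℝ} (hB : 0 ≤ Bspl T m j x) :
    0 ≤ rising T m j x := by
  by_cases hx : x ∈ Set.Icc (T (j - m)) (T j)
  · exact mul_nonneg (div_nonneg (sub_nonneg.2 hx.1) (sub_nonneg.2 (hx.1.trans hx.2))) hB
  · rw [rising, eq_zero_of_notMem hT x m j hx, mul_zero]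

theorem falling_nonneg (hT : Monotone T) {m : ℕ} {j : ℤ} {x : ℝ} (hB : 0 ≤ Bspl T m j x) :
    0 ≤ falling T m j x := by
  by_cases hx : x ∈ Set.Icc (T (j - m)) (T j)
  · exact mul_nonneg (div_nonneg (sub_nonneg.2 hx.2) (sub_nonneg.2 (hx.1.trans hx.2))) hB
  · rw [falling, eq_zero_of_notMem hT x m j hx, mul_zero]

theorem rising_add_falling_le {m : ℕ} {j : ℤ} {x : ℝ} (hB : 0 ≤ Bspl T m j x) :
    rising T m j x + falling T m j x ≤ Bspl T m j x := by
  rw [rising, falling, ← add_mul, ← add_div, sub_add_sub_cancel']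
  exact mul_le_of_le_one_left hB (div_self_le_one _)

theorem nonneg (hT : Monotone T) : ∀ m j x, 0 ≤ Bspl T m j x
  | 0, _, _ => le_rfl
  | 1, _, _ => by
    unfold Bspl
    split_ifs <;> norm_num
  | m + 2, j, x => by
    rw [eq_rising_add_falling]
    exact add_nonneg (rising_nonneg hT (nonneg hT _ _ x)) (falling_nonneg hT (nonneg hT _ _ x))

/-- At `x = 1`, the clause closing the last knot interval can make two neighbouring B-splines of
order one nonzero when some knots exceed `1`. -/
theorem one_apply_of_ne_one (T : ℤ → ℝ) (j : ℤ) {x : ℝ} (hx : x ≠ 1) :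
    Bspl T 1 j x = (Set.Ico (T (j - 1)) (T j)).indicator 1 x := by
  classical
  simp [Bspl, hx, Set.indicator_apply]

theorem sum_le_one (hT : Monotone T) {x : ℝ} (hx : x ≠ 1) :
    ∀ (m : ℕ) (s : Finset ℤ), ∑ j ∈ s, Bspl T m j x ≤ 1
  | 0, s => by simp [Bspl]
  | 1, s => by
    simpa only [one_apply_of_ne_one T _ hx, Nat.cast_one]
      using sum_indicator_Ico_knots_le hT 1 x s
  | m + 2, s => by
    let s' := s.image (· - 1)
    have hB := fun j => nonneg hT (m + 1) j x
    have rising_le : ∑ j ∈ s, rising T (m + 1) (j - 1) x ≤ ∑ j ∈ s' ∪ s, rising T (m + 1) j x := by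
      rw [← Finset.sum_image (f := fun j => rising T (m + 1) j x) (sub_left_injective.injOn)]
      exact Finset.sum_le_sum_of_subset_of_nonneg Finset.subset_union_left
        fun j _ _ => rising_nonneg hT (hB j)
    have falling_le : ∑ j ∈ s, falling T (m + 1) j x ≤ ∑ j ∈ s' ∪ s, falling T (m + 1) j x :=
      Finset.sum_le_sum_of_subset_of_nonneg Finset.subset_union_right
        fun j _ _ => falling_nonneg hT (hB j)
    calc ∑ j ∈ s, Bspl T (m + 2) j x
        = ∑ j ∈ s, rising T (m + 1) (j - 1) x + ∑ j ∈ s, falling T (m + 1) j x := by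
          simp only [eq_rising_add_falling, Finset.sum_add_distrib]
      _ ≤ ∑ j ∈ s' ∪ s, (rising T (m + 1) j x + falling T (m + 1) j x) := by
          rw [Finset.sum_add_distrib]
          exact add_le_add rising_le falling_le
      _ ≤ ∑ j ∈ s' ∪ s, Bspl T (m + 1) j x :=
          Finset.sum_le_sum fun j _ => rising_add_falling_le (hB j)
      _ ≤ 1 := sum_le_one hT hx (m + 1) _

theorem ae_norm_le_one (hT : Monotone T) (m : ℕ) (j : ℤ) : ∀ᵐ x, ‖Bspl T m j x‖ ≤ 1 := by
  filter_upwards [Measure.ae_ne volume 1] with x hx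
  rw [Real.norm_of_nonneg (nonneg hT m j x)]
  simpa only [Finset.sum_singleton] using sum_le_one hT hx m {j}

theorem hasBoundedOverlap (hT : Monotone T) (m : ℕ) :
    HasBoundedOverlap volume (Bspl T m) 1 where
  integrable j := by
    have hint : IntegrableOn (Bspl T m j) (Set.Icc (T (j - m)) (T j)) :=
      Measure.integrableOn_of_bounded (by simp) (measurable T m j).aestronglyMeasurable
        (ae_restrict_of_ae (ae_norm_le_one hT m j))
    exact hint.integrable_of_forall_notMem_eq_zero fun x => eq_zero_of_notMem hT x m j
  nonneg := nonneg hT m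
  sum_le := by
    filter_upwards [Measure.ae_ne volume 1] with x hx using sum_le_one hT hx m

theorem integral_le (hT : Monotone T) (m : ℕ) (j : ℤ) :
    ∫ x, Bspl T m j x ≤ T j - T (j - m) := by
  rw [← setIntegral_eq_integral_of_forall_compl_eq_zero fun x => eq_zero_of_notMem hT x m j]
  refine (le_abs_self _).trans ((norm_setIntegral_le_of_norm_le_const_ae' (C := 1) (by simp)
    ((ae_norm_le_one hT m j).mono fun x hx _ => hx)).trans_eq ?_)
  rw [one_mul, Real.volume_real_Icc_of_le (hT (by omega))]

end Bspl

section Pieces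

open Polynomial

namespace Bspl

variable {T : ℤ → ℝ} {l : ℤ}

/-- The polynomial that agrees with `B_{j,m}` on the `l`th knot interval `[T (l - 1), T l)`. -/
noncomputable def piece (T : ℤ → ℝ) (l : ℤ) : ℕ → ℤ → ℝ[X]
  | 0, _ => 0
  | 1, j => if j = l then 1 else 0
  | m + 2, j =>
      C (1 / (T (j - 1) - T (j - (m + 2)))) * (X - C (T (j - (m + 2)))) * piece T l (m + 1) (j - 1)
        + C (1 / (T j - T (j - (m + 1)))) * (C (T j) - X) * piece T l (m + 1) j

theorem piece_succ (T : ℤ → ℝ) (l : ℤ) {m : ℕ} (hm : 1 ≤ m) (j : ℤ) :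
    piece T l (m + 1) j =
      C (1 / (T (j - 1) - T (j - (m + 1)))) * (X - C (T (j - (m + 1)))) * piece T l m (j - 1)
        + C (1 / (T j - T (j - m))) * (C (T j) - X) * piece T l m j := by
  obtain ⟨m, rfl⟩ := Nat.exists_eq_add_of_le' hm
  rw [piece, Nat.cast_succ, add_assoc (m : ℤ), one_add_one_eq_two]

theorem degree_piece_lt (T : ℤ → ℝ) (l : ℤ) : ∀ m j, (piece T l m j).degree < m
  | 0, _ => by simp [piece]
  | 1, j => by
    unfold piece
    split_ifs <;> simp
  | m + 2, j => by
    have degree_mul_lt : ∀ {p : ℝ[X]} (i : ℤ), p.degree ≤ 1 →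
        (p * piece T l (m + 1) i).degree < (m + 2 : ℕ) := fun {p} i hp => by
      calc (p * piece T l (m + 1) i).degree ≤ 1 + (piece T l (m + 1) i).degree :=
            (degree_mul_le _ _).trans (by gcongr)
        _ < 1 + (m + 1 : ℕ) := WithBot.add_lt_add_left (by simp) (degree_piece_lt T l (m + 1) i)
        _ = (m + 2 : ℕ) := by norm_cast; ring_nf
    unfold piece
    refine (degree_add_le _ _).trans_lt (max_lt (degree_mul_lt _ ?_) (degree_mul_lt _ ?_)) <;>
      compute_degree

theorem eq_eval_piece (hT : Monotone T) {x : ℝ} (hl : T (l - 1) ≤ x) (hr : x < T l) (hx : x ≠ 1) :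
    ∀ m j, Bspl T m j x = (piece T l m j).eval x
  | 0, _ => by simp [Bspl, piece]
  | 1, j => by
    have mem_iff : x ∈ Set.Ico (T (j - 1)) (T j) ↔ j = l := by
      refine ⟨fun hj => ?_, fun hj => hj ▸ ⟨hl, hr⟩⟩
      have := hT.reflect_lt (hl.trans_lt hj.2)
      have := hT.reflect_lt (hj.1.trans_lt hr)
      omega
    classical
    rw [one_apply_of_ne_one T j hx, Set.indicator_apply, piece]
    simp only [mem_iff, Pi.one_apply]
    split_ifs <;> simp
  | m + 2, j => by
    rw [Bspl, piece, eq_eval_piece hT hl hr hx (m + 1) (j - 1), eq_eval_piece hT hl hr hx (m + 1) j]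
    simp only [eval_add, eval_mul, eval_sub, eval_C, eval_X]
    ring

theorem derivative_piece (hT : Monotone T) (m : ℕ) (j : ℤ) :
    derivative (piece T l (m + 1) j) = C (m : ℝ) *
      (C (1 / (T (j - 1) - T (j - (m + 1)))) * piece T l m (j - 1) -
        C (1 / (T j - T (j - m))) * piece T l m j) := by
  induction m generalizing j with
  | zero =>
    unfold piece
    split_ifs <;> simp
  | succ m ih =>
    rw [piece_succ T l (by omega) j]
    simp only [derivative_add, derivative_mul, derivative_C, derivative_sub, derivative_X, ih]
    rcases m.eq_zero_or_pos with rfl | hm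
    · simp only [CharP.cast_eq_zero, map_zero, zero_add, zero_mul, mul_zero, add_zero, zero_sub,
        mul_neg, Nat.cast_one, map_one, one_mul, sub_zero, sub_self, div_zero, mul_one]
      ring
    rw [piece_succ T l hm j, piece_succ T l hm (j - 1)]
    have cross_terms_cancel : C (1 / (T (j - 1) - T (j - (m + 1)))) *
        (C (1 / (T j - T (j - (m + 1)))) * (C (T j) - C (T (j - (m + 1)))) -
          C (1 / (T (j - 1) - T (j - (m + 2)))) * (C (T (j - 1)) - C (T (j - (m + 2))))) = 0 := by
      simp only [← C_sub, ← C_mul, C_eq_zero]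
      rcases (sub_nonneg.2 (hT (show j - (m + 1) ≤ j - 1 by omega))).eq_or_lt with h | h
      · rw [← h, div_zero, zero_mul]
      · have hj : T (j - 1) ≤ T j := hT (by omega)
        have hjm : T (j - (m + 2)) ≤ T (j - (m + 1)) := hT (by omega)
        rw [one_div_mul_cancel (by linarith), one_div_mul_cancel (by linarith), sub_self, mul_zero]
    push_cast
    rw [show j - 1 - ((m : ℤ) + 1) = j - (m + 2) by ring, show j - ((m : ℤ) + 1 + 1) = j - (m + 2)
      by ring, show j - 1 - (m : ℤ) = j - (m + 1) by ring, C_add, C_1]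
    linear_combination C (m : ℝ) * piece T l m (j - 1) * cross_terms_cancel

end Bspl

/-- The polar derivative with respect to `u`, normalized on polynomials of degree at most `m`: one
step of blossoming, which replaces one of the `m` arguments of the symmetric `m`-affine form of `p`
by `u`. -/
noncomputable def polar (m : ℕ) (u : ℝ) : ℝ[X] →ₗ[ℝ] ℝ[X] :=
  LinearMap.id + LinearMap.mulLeft ℝ (C (1 / (m : ℝ)) * (C u - X)) ∘ₗ derivative

theorem polar_apply (m : ℕ) (u : ℝ) (p : ℝ[X]) :
    polar m u p = p + C (1 / (m : ℝ)) * (C u - X) * derivative p :=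
  rfl

theorem polar_X_pow_succ (m : ℕ) (u : ℝ) (k : ℕ) :
    polar m u (X ^ (k + 1)) =
      (1 - (k + 1) / m : ℝ) • X ^ (k + 1) + ((k + 1) / m * u : ℝ) • X ^ k := by
  rw [polar_apply, derivative_X_pow_succ, smul_eq_C_mul, smul_eq_C_mul]
  simp only [C_sub, C_mul, C_1, div_eq_mul_inv, one_mul, C_add, pow_succ]
  ring

theorem abs_apply_polar_X_pow_le {m : ℕ} (hm : 1 ≤ m) {u K : ℝ} (hu : |u| ≤ K)
    {φ : ℝ[X] →ₗ[ℝ] ℝ} (hφ : ∀ k < m, |φ (X ^ k)| ≤ K ^ k) {k : ℕ} (hk : k ≤ m) :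
    |φ (polar m u (X ^ k))| ≤ K ^ k := by
  rcases k with _ | k
  · simpa [polar_apply] using hφ 0 hm
  rw [polar_X_pow_succ, map_add, map_smul, map_smul, smul_eq_mul, smul_eq_mul]
  set t : ℝ := (k + 1) / m with ht
  have ht0 : 0 ≤ t := by positivity
  have ht1 : t ≤ 1 := div_le_one_of_le₀ (by exact_mod_cast hk) m.cast_nonneg
  have higher : |(1 - t) * φ (X ^ (k + 1))| ≤ (1 - t) * K ^ (k + 1) := by
    rw [abs_mul, abs_of_nonneg (sub_nonneg.2 ht1)]
    rcases hk.eq_or_lt with rfl | hk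
    · simp [ht, div_self (Nat.cast_add_one_ne_zero k : (k + 1 : ℝ) ≠ 0)]
    · exact mul_le_mul_of_nonneg_left (hφ _ hk) (sub_nonneg.2 ht1)
  have lower : |t * u * φ (X ^ k)| ≤ t * K * K ^ k := by
    rw [abs_mul, abs_mul, abs_of_nonneg ht0]
    exact mul_le_mul (mul_le_mul_of_nonneg_left hu ht0) (hφ k hk) (abs_nonneg _)
      (mul_nonneg ht0 ((abs_nonneg u).trans hu))
  calc |(1 - t) * φ (X ^ (k + 1)) + t * u * φ (X ^ k)|
      ≤ (1 - t) * K ^ (k + 1) + t * K * K ^ k := (abs_add_le _ _).trans (add_le_add higher lower)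
    _ = K ^ (k + 1) := by ring

namespace Bspl

variable {T : ℤ → ℝ} {l : ℤ}

theorem polar_piece (hT : Monotone T) {m : ℕ} (hm : 1 ≤ m) (u : ℝ) (j : ℤ) :
    polar m u (piece T l (m + 1) j) =
      ((u - T (j - (m + 1))) / (T (j - 1) - T (j - (m + 1)))) • piece T l m (j - 1) +
      ((T j - u) / (T j - T (j - m))) • piece T l m j := by
  have hmC : C (1 / (m : ℝ)) * C (m : ℝ) = 1 := by
    rw [← C_mul, one_div_mul_cancel (by positivity), C_1]
  rw [polar_apply, derivative_piece hT, piece_succ T l hm, smul_eq_C_mul, smul_eq_C_mul,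
    div_eq_mul_one_div (u - _), div_eq_mul_one_div (T j - u)]
  simp only [C_mul, C_sub]
  linear_combination (C u - X) * (C (1 / (T (j - 1) - T (j - (m + 1)))) * piece T l m (j - 1) -
    C (1 / (T j - T (j - m))) * piece T l m j) * hmC

theorem apply_polar_piece_of_dual_pred (hT : Monotone T) {m : ℕ} (hm : 1 ≤ m) {i : ℤ}
    (hi : T (i - (m + 1)) < T (i - 1)) {φ : ℝ[X] →ₗ[ℝ] ℝ}
    (hφ : ∀ j, φ (piece T l m j) = if i - 1 = j then 1 else 0) (j : ℤ) :
    φ (polar m (T (i - 1)) (piece T l (m + 1) j)) = if i = j then 1 else 0 := by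
  rw [polar_piece hT hm, map_add, map_smul, map_smul, hφ, hφ, smul_eq_mul, smul_eq_mul]
  rcases eq_or_ne i j with rfl | hij
  · simp [div_self (sub_pos.2 hi).ne']
  · rcases eq_or_ne (i - 1) j with rfl | hij'
    · simp [hij]
    · simp [hij, hij']

theorem apply_polar_piece_of_dual (hT : Monotone T) {m : ℕ} (hm : 1 ≤ m) {i : ℤ}
    (hi : T (i - m) < T i) {φ : ℝ[X] →ₗ[ℝ] ℝ}
    (hφ : ∀ j, φ (piece T l m j) = if i = j then 1 else 0) (j : ℤ) :
    φ (polar m (T (i - m)) (piece T l (m + 1) j)) = if i = j then 1 else 0 := by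
  rw [polar_piece hT hm, map_add, map_smul, map_smul, hφ, hφ, smul_eq_mul, smul_eq_mul]
  rcases eq_or_ne i j with rfl | hij
  · simp [div_self (sub_pos.2 hi).ne', show i ≠ i - 1 by omega]
  · rcases eq_or_ne i (j - 1) with rfl | hij'
    · simp [show j - 1 - (m : ℤ) = j - (m + 1) by ring]
    · simp [hij, hij']

/-- The functional dual to the `i`th piece among the nonzero pieces of order `m` on the `l`th knot
interval: the blossom evaluated at the knots `T (i - m + 1), …, T (i - 1)`. The knots are inserted
in such an order that the `l`th knot interval stays inside the support. For `m = 1` the pieces are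
constant, so that the evaluation point `0` is immaterial. -/
noncomputable def dualFunctional (T : ℤ → ℝ) (l : ℤ) : ℕ → ℤ → ℝ[X] →ₗ[ℝ] ℝ
  | 0, _ => 0
  | 1, _ => leval 0
  | m + 2, i =>
      if l < i then dualFunctional T l (m + 1) (i - 1) ∘ₗ polar (m + 1) (T (i - 1))
      else dualFunctional T l (m + 1) i ∘ₗ polar (m + 1) (T (i - (m + 1 : ℕ)))

theorem dualFunctional_piece (hT : Monotone T) (hl : T (l - 1) < T l) : ∀ (m : ℕ) (i j : ℤ),
    l ≤ i → i < l + m → dualFunctional T l m i (piece T l m j) = if i = j then 1 else 0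
  | 0, _, _, _, _ => by omega
  | 1, i, j, _, _ => by
    obtain rfl : i = l := by omega
    rw [dualFunctional, piece, leval_apply]
    rcases eq_or_ne i j with rfl | hij
    · simp
    · simp [hij, hij.symm]
  | m + 2, i, j, _, _ => by
    by_cases h : l < i
    · rw [dualFunctional, if_pos h]
      refine apply_polar_piece_of_dual_pred hT (by omega) ?_ (fun j =>
        dualFunctional_piece hT hl (m + 1) (i - 1) j (by omega) (by omega)) j
      exact (hT (by omega)).trans_lt (hl.trans_le (hT (by omega)))
    · rw [dualFunctional, if_neg h]
      refine apply_polar_piece_of_dual hT (by omega) ?_ (fun j =>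
        dualFunctional_piece hT hl (m + 1) i j (by omega) (by omega)) j
      exact (hT (by omega)).trans_lt (hl.trans_le (hT (by omega)))

theorem abs_dualFunctional_X_pow_le {K : ℝ} : ∀ (m : ℕ) (i : ℤ),
    (∀ n, i - m < n → n < i → |T n| ≤ K) → ∀ k < m, |dualFunctional T l m i (X ^ k)| ≤ K ^ k
  | 1, i, _, k, hk => by
    obtain rfl : k = 0 := by omega
    simp [dualFunctional]
  | m + 2, i, hTK, k, hk => by
    rw [dualFunctional]
    push_cast at hTK
    split_ifs with h
    · exact abs_apply_polar_X_pow_le (by omega) (hTK _ (by omega) (by omega))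
        (abs_dualFunctional_X_pow_le (m + 1) (i - 1) fun n hn hni =>
          hTK n (by push_cast at hn; omega) (by omega)) (by omega)
    · exact abs_apply_polar_X_pow_le (by omega) (hTK _ (by omega) (by omega))
        (abs_dualFunctional_X_pow_le (m + 1) i fun n hn hni =>
          hTK n (by push_cast at hn; omega) hni) (by omega)

end Bspl

end Pieces

section Representers

open Polynomial

variable {a b : ℝ}

theorem integral_eval_mul_self_pos (hab : a < b) {p : ℝ[X]} (hp : p ≠ 0) :
    0 < ∫ x in a..b, p.eval x * p.eval x := by
  obtain ⟨x, hx, hpx⟩ : ∃ x ∈ Set.Icc a b, p.eval x ≠ 0 := by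
    by_contra! hzero
    exact hp (eq_zero_of_infinite_isRoot p ((Set.Icc_infinite hab).mono hzero))
  exact intervalIntegral.integral_pos hab (by fun_prop) (fun x _ => mul_self_nonneg _)
    ⟨x, hx, mul_self_pos.2 hpx⟩

/-- The `L²(a, b)` inner product on real polynomials. -/
noncomputable def integralPairing (a b : ℝ) : ℝ[X] →ₗ[ℝ] ℝ[X] →ₗ[ℝ] ℝ :=
  LinearMap.mk₂ ℝ (fun p q => ∫ x in a..b, p.eval x * q.eval x)
    (fun p p' q => by
      simp only [eval_add, add_mul]
      exact intervalIntegral.integral_add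
        (Continuous.intervalIntegrable (by fun_prop) _ _)
        (Continuous.intervalIntegrable (by fun_prop) _ _))
    (fun c p q => by
      simp only [eval_smul, smul_eq_mul, mul_assoc, intervalIntegral.integral_const_mul])
    (fun p q q' => by
      simp only [eval_add, mul_add]
      exact intervalIntegral.integral_add
        (Continuous.intervalIntegrable (by fun_prop) _ _)
        (Continuous.intervalIntegrable (by fun_prop) _ _))
    (fun c p q => by
      simp only [eval_smul, smul_eq_mul, mul_left_comm _ c, intervalIntegral.integral_const_mul])

theorem exists_integralPairing_eq (hab : a < b) (n : ℕ) (φ : ℝ[X] →ₗ[ℝ] ℝ) :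
    ∃ e, ∀ p : ℝ[X], p.degree < n → integralPairing a b e p = φ p := by
  have : FiniteDimensional ℝ (degreeLT ℝ n) := Module.Finite.equiv (degreeLTEquiv ℝ n).symm
  let Φ := (integralPairing a b).domRestrict₁₂ (degreeLT ℝ n) (degreeLT ℝ n)
  have hinj : Function.Injective Φ := by
    refine (injective_iff_map_eq_zero Φ).2 fun p hp => by_contra fun hne => ?_
    refine (integral_eval_mul_self_pos hab (p := p) (by simpa using hne)).ne' ?_
    exact LinearMap.congr_fun hp p
  have hsurj : Function.Surjective Φ :=
    (LinearMap.injective_iff_surjective_of_finrank_eq_finrank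
      Subspace.dual_finrank_eq.symm).1 hinj
  obtain ⟨e, he⟩ := hsurj (φ ∘ₗ (degreeLT ℝ n).subtype)
  exact ⟨e, fun p hp => LinearMap.congr_fun he ⟨p, mem_degreeLT.2 hp⟩⟩

theorem apply_eq_sum_coeff_mul_apply_X_pow (φ : ℝ[X] →ₗ[ℝ] ℝ) {n : ℕ} {p : ℝ[X]}
    (hp : p.degree < n) : φ p = ∑ k ∈ Finset.range n, p.coeff k * φ (X ^ k) := by
  rcases eq_or_ne p 0 with rfl | hp0
  · simp
  conv_lhs => rw [p.as_sum_range_C_mul_X_pow' ((natDegree_lt_iff_degree_lt hp0).2 hp), map_sum]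
  simp only [← smul_eq_C_mul, map_smul, smul_eq_mul]

theorem exists_bounded_representer (hab : a < b) (n : ℕ) (c : ℕ → ℝ) :
    ∃ M, 0 ≤ M ∧ ∀ φ : ℝ[X] →ₗ[ℝ] ℝ, (∀ k < n, |φ (X ^ k)| ≤ c k) →
      ∃ g : ℝ[X], (∀ x ∈ Set.Icc a b, |g.eval x| ≤ M) ∧
        ∀ p : ℝ[X], p.degree < n → ∫ x in a..b, g.eval x * p.eval x = φ p := by
  choose e he using fun k => exists_integralPairing_eq hab n (lcoeff ℝ k)
  choose E hE using fun k => isCompact_Icc.exists_bound_of_continuousOn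
    (f := fun x => (e k).eval x) (s := Set.Icc a b) (by fun_prop)
  refine ⟨∑ k ∈ Finset.range n, |c k| * E k, Finset.sum_nonneg fun k _ => mul_nonneg (abs_nonneg _)
    ((norm_nonneg _).trans (hE k a ⟨le_rfl, hab.le⟩)), fun φ hφ =>
    ⟨∑ k ∈ Finset.range n, φ (X ^ k) • e k, fun x hx => ?_, fun p hp => ?_⟩⟩
  · rw [eval_finsetSum]
    refine Finset.abs_sum_le_sum_abs _ _ |>.trans (Finset.sum_le_sum fun k hk => ?_)
    rw [eval_smul, smul_eq_mul, abs_mul]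
    exact mul_le_mul ((hφ k (Finset.mem_range.1 hk)).trans (le_abs_self _)) (hE k x hx)
      (abs_nonneg _) (abs_nonneg _)
  · change integralPairing a b _ p = _
    rw [map_sum, LinearMap.sum_apply, apply_eq_sum_coeff_mul_apply_X_pow φ hp]
    refine Finset.sum_congr rfl fun k _ => ?_
    rw [map_smul, LinearMap.smul_apply, he k p hp, lcoeff_apply, smul_eq_mul, mul_comm]

end Representers

section DualBasis

open Polynomial

namespace Bspl

variable {T : ℤ → ℝ} {l : ℤ}

/-- The knots after the affine change of variable that maps the `l`th knot interval onto the unit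
interval. -/
noncomputable def unitKnots (T : ℤ → ℝ) (l : ℤ) (n : ℤ) : ℝ :=
  (T n - T (l - 1)) / (T l - T (l - 1))

theorem unitKnots_monotone (hT : Monotone T) (l : ℤ) : Monotone (unitKnots T l) := fun _ _ h =>
  div_le_div_of_nonneg_right (sub_le_sub_right (hT h) _) (sub_nonneg.2 (hT (by omega)))

theorem unitKnots_pred (T : ℤ → ℝ) (l : ℤ) : unitKnots T l (l - 1) = 0 := by
  rw [unitKnots, sub_self, zero_div]

theorem unitKnots_self (hl : T (l - 1) < T l) : unitKnots T l l = 1 :=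
  div_self (sub_pos.2 hl).ne'

theorem abs_unitKnots_le (hT : Monotone T) (hl : T (l - 1) < T l) {i n : ℤ} {q : ℕ}
    (hli : l ≤ i) (hil : i < l + q) (hlong : T i - T (i - q) ≤ q * (T l - T (l - 1)))
    (hn : i - q < n) (hni : n < i) : |unitKnots T l n| ≤ q := by
  have hTn : T (i - q) ≤ T n := hT hn.le
  have hTn' : T n ≤ T i := hT hni.le
  have hTl : T (i - q) ≤ T (l - 1) := hT (by omega)
  have hTl' : T l ≤ T i := hT hli
  have hh := sub_pos.2 hl
  rw [unitKnots, abs_div, abs_of_pos hh, div_le_iff₀ hh, abs_le]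
  constructor <;> linarith

theorem eval_piece_unitKnots (hl : T (l - 1) < T l) (x : ℝ) : ∀ m j,
    (piece (unitKnots T l) l m j).eval ((x - T (l - 1)) / (T l - T (l - 1))) =
      (piece T l m j).eval x
  | 0, _ => by simp [piece]
  | 1, j => by
    unfold piece
    split_ifs <;> simp
  | m + 2, j => by
    have hh := (sub_pos.2 hl).ne'
    rw [piece, piece]
    simp only [eval_add, eval_mul, eval_sub, eval_C, eval_X, eval_piece_unitKnots hl x (m + 1),
      unitKnots, ← sub_div, sub_sub_sub_cancel_right, one_div_mul_eq_div,
      div_div_div_cancel_right₀ hh]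

theorem integral_mul_indicator_eval (hT : Monotone T) (hl : T (l - 1) < T l) (m : ℕ) (j : ℤ)
    (g : ℝ[X]) :
    ∫ x, Bspl T m j x * (Set.Ico (T (l - 1)) (T l)).indicator
        (fun x => g.eval ((x - T (l - 1)) / (T l - T (l - 1)))) x =
      (T l - T (l - 1)) * ∫ y in (0 : ℝ)..1, g.eval y * (piece (unitKnots T l) l m j).eval y := by
  set a := T (l - 1)
  set h := T l - a
  let F : ℝ → ℝ := fun y => g.eval y * (piece (unitKnots T l) l m j).eval y
  calc _ = ∫ x, (Set.Ico a (T l)).indicator (fun x => F ((x - a) / h)) x := by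
        refine integral_congr_ae ?_
        filter_upwards [Measure.ae_ne volume 1] with x hx
        by_cases hxl : x ∈ Set.Ico a (T l)
        · simp only [Set.indicator_of_mem hxl, F]
          rw [eval_piece_unitKnots hl, eq_eval_piece hT hxl.1 hxl.2 hx, mul_comm]
        · simp only [Set.indicator_of_notMem hxl, mul_zero]
    _ = ∫ x in a..T l, F (x / h - a / h) := by
        rw [integral_indicator measurableSet_Ico, integral_Ico_eq_integral_Ioc,
          ← intervalIntegral.integral_of_le hl.le]
        simp only [sub_div]
    _ = h * ∫ y in (0 : ℝ)..1, F y := by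
        have hpos : 0 < h := sub_pos.2 hl
        rw [intervalIntegral.integral_comp_div_sub F hpos.ne', sub_self, ← sub_div,
          div_self hpos.ne', smul_eq_mul]

theorem exists_dual_polynomial (q : ℕ) :
    ∃ M : ℝ, 0 ≤ M ∧ ∀ {T : ℤ → ℝ} {l i : ℤ}, Monotone T → T (l - 1) < T l → l ≤ i → i < l + q →
      T i - T (i - q) ≤ q * (T l - T (l - 1)) →
      ∃ g : ℝ[X], (∀ y ∈ Set.Icc (0 : ℝ) 1, |g.eval y| ≤ M) ∧
        ∀ j, ∫ y in (0 : ℝ)..1, g.eval y * (piece (unitKnots T l) l q j).eval y =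
          if i = j then 1 else 0 := by
  obtain ⟨M, hM, hrep⟩ := exists_bounded_representer (zero_lt_one' ℝ) q fun k => (q : ℝ) ^ k
  refine ⟨M, hM, fun {T l i} hT hl hli hil hlong => ?_⟩
  obtain ⟨g, hgM, hg⟩ := hrep (dualFunctional (unitKnots T l) l q i)
    (abs_dualFunctional_X_pow_le q i fun n => abs_unitKnots_le hT hl hli hil hlong)
  have hunit : unitKnots T l (l - 1) < unitKnots T l l := by
    rw [unitKnots_pred, unitKnots_self hl]
    exact one_pos
  refine ⟨g, hgM, fun j => ?_⟩
  rw [hg _ (degree_piece_lt _ l q j),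
    dualFunctional_piece (unitKnots_monotone hT l) hunit q i j hli hil]

theorem exists_dual_function_on_knot_interval (q : ℕ) :
    ∃ M : ℝ, 0 ≤ M ∧ ∀ {T : ℤ → ℝ} {l i : ℤ}, Monotone T → T (l - 1) < T l → l ≤ i → i < l + q →
      T i - T (i - q) ≤ q * (T l - T (l - 1)) →
      ∃ G : ℝ → ℝ, Measurable G ∧
        (∀ x, |G x| ≤ (Set.Ico (T (l - 1)) (T l)).indicator (fun _ => M) x) ∧
        ∀ j, ∫ x, Bspl T q j x * G x = if i = j then T l - T (l - 1) else 0 := by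
  obtain ⟨M, hM, hdual⟩ := exists_dual_polynomial q
  refine ⟨M, hM, fun {T l i} hT hl hli hil hlong => ?_⟩
  obtain ⟨g, hgM, hg⟩ := hdual hT hl hli hil hlong
  refine ⟨(Set.Ico (T (l - 1)) (T l)).indicator
    fun x => g.eval ((x - T (l - 1)) / (T l - T (l - 1))), ?_, fun x => ?_, fun j => ?_⟩
  · exact Measurable.indicator (by fun_prop) measurableSet_Ico
  · rw [← Real.norm_eq_abs, norm_indicator_eq_indicator_norm]
    refine Set.indicator_le_indicator' fun hx => hgM _ ⟨?_, ?_⟩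
    · exact div_nonneg (sub_nonneg.2 hx.1) (sub_pos.2 hl).le
    · exact div_le_one_of_le₀ (sub_le_sub_right hx.2.le _) (sub_pos.2 hl).le
  · rw [integral_mul_indicator_eval hT hl, hg, mul_ite, mul_one, mul_zero]

theorem exists_dual_function {q : ℕ} (hq : 1 ≤ q) :
    ∃ κ : ℝ, 0 < κ ∧ κ ≤ 1 ∧ ∀ T : ℤ → ℝ, Monotone T → ∀ i, ∃ H : ℝ → ℝ, Measurable H ∧
      (∀ x, |H x| ≤ (Set.Ico (T (i - q)) (T i)).indicator 1 x) ∧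
      ∀ j, ∫ x, Bspl T q j x * H x = if i = j then κ * (T i - T (i - q)) else 0 := by
  obtain ⟨M, hM, hdual⟩ := exists_dual_function_on_knot_interval q
  have hqM : 0 ≤ q * M := by positivity
  have hden : 0 < q * M + 1 := by positivity
  refine ⟨1 / (q * M + 1), by positivity, div_le_one_of_le₀ (by linarith) hden.le,
    fun T hT i => ?_⟩
  rcases (sub_nonneg.2 (hT (show i - q ≤ i by omega))).eq_or_lt with hw | hw
  · refine ⟨0, measurable_zero, fun x => ?_, fun j => ?_⟩
    · simpa using Set.indicator_nonneg (f := 1) (fun _ _ => zero_le_one) x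
    · simp [← hw]
  obtain ⟨l, hli, hil, hlong⟩ := exists_knot_interval_ge_average T i hq
  set w := T i - T (i - q)
  have hh : 0 < T l - T (l - 1) := pos_of_mul_pos_right (hw.trans_le hlong) q.cast_nonneg
  obtain ⟨G, hG, hGM, hGdual⟩ := hdual hT (sub_pos.1 hh) hli hil hlong
  set c := 1 / (q * M + 1) * (w / (T l - T (l - 1))) with hc
  have hc0 : 0 ≤ c := by positivity
  have hcM : c * M ≤ 1 := by
    calc c * M = w / (T l - T (l - 1)) * M / (q * M + 1) := by ring
      _ ≤ q * M / (q * M + 1) := by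
        gcongr
        exact (div_le_iff₀ hh).2 hlong
      _ ≤ 1 := div_le_one_of_le₀ (by linarith) hden.le
  refine ⟨fun x => c * G x, hG.const_mul c, fun x => ?_, fun j => ?_⟩
  · calc |c * G x| = c * |G x| := by rw [abs_mul, abs_of_nonneg hc0]
      _ ≤ c * (Set.Ico (T (l - 1)) (T l)).indicator (fun _ => M) x := by gcongr; exact hGM x
      _ = (Set.Ico (T (l - 1)) (T l)).indicator (fun _ => c * M) x := by
        rw [Set.indicator_const_mul]
      _ ≤ (Set.Ico (T (l - 1)) (T l)).indicator 1 x := Set.indicator_le_indicator hcM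
      _ ≤ (Set.Ico (T (i - q)) (T i)).indicator 1 x := Set.indicator_le_indicator_of_subset
        (Set.Ico_subset_Ico (hT (by omega)) (hT hli)) (fun _ => zero_le_one) x
  · simp only [mul_left_comm _ c, integral_const_mul]
    rw [hGdual, mul_ite, mul_zero, hc, mul_assoc, div_mul_cancel₀ _ hh.ne']

theorem exists_biorthogonal {q : ℕ} (hq : 1 ≤ q) :
    ∃ κ : ℝ, 0 < κ ∧ κ ≤ 1 ∧ ∀ T : ℤ → ℝ, Monotone T → ∃ H : ℤ → ℝ → ℝ,
      (∀ i, Measurable (H i)) ∧ (∀ i x, |H i x| ≤ (Set.Ico (T (i - q)) (T i)).indicator 1 x) ∧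
      IsBiorthogonal volume (Bspl T q) H fun i => κ * (T i - T (i - q)) := by
  obtain ⟨κ, hκ, hκ1, hdual⟩ := exists_dual_function hq
  refine ⟨κ, hκ, hκ1, fun T hT => ?_⟩
  choose H hH hHb hHdual using hdual T hT
  refine ⟨H, hH, hHb, fun i => ?_, fun i j hij => ?_⟩
  · rw [hHdual, if_pos rfl]
  · rw [hHdual, if_neg hij.symm]

end Bspl

end DualBasis

namespace KnotSeq

theorem T_eq (ks : KnotSeq) (l : ℤ) : ks.T l = ks.t (min l.toNat (ks.N + 1)) := by
  unfold T
  split_ifs with h₀ h₁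
  · rw [Int.toNat_of_nonpos h₀, Nat.zero_min, ks.t0]
  · rw [min_eq_right (by omega), ks.tN]
  · rw [min_eq_left (by omega)]

theorem T_monotone (ks : KnotSeq) : Monotone ks.T := fun l l' h => by
  have ht : MonotoneOn ks.t (Set.Iic (ks.N + 1)) :=
    (strictMonoOn_Iic_of_lt_succ fun l => ks.mono l).monotoneOn
  rw [T_eq, T_eq]
  exact ht (Set.mem_Iic.2 (min_le_right _ _)) (Set.mem_Iic.2 (min_le_right _ _))
    (min_le_min_right _ (Int.toNat_le_toNat h))

theorem T_mem_Icc (ks : KnotSeq) (l : ℤ) : ks.T l ∈ Set.Icc 0 1 := by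
  constructor
  · calc (0 : ℝ) = ks.T (min l 0) := by simp [T]
      _ ≤ ks.T l := ks.T_monotone (min_le_left l 0)
  · calc ks.T l ≤ ks.T (max l (ks.N + 1)) := ks.T_monotone (le_max_left l _)
      _ = 1 := by rw [T, if_neg (by omega), if_pos (le_max_right _ _)]

end KnotSeq

section TensorProduct

namespace Bspl

variable {ι : Type*} [Fintype ι] {T : ι → ℤ → ℝ}

theorem measurable_prod (T : ι → ℤ → ℝ) (q : ι → ℕ) (j : ι → ℤ) :
    Measurable fun x : ι → ℝ => ∏ k, Bspl (T k) (q k) (j k) (x k) :=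
  Finset.measurable_fun_prod _ fun k _ =>
    (measurable (T k) (q k) (j k)).comp (measurable_pi_apply k)

theorem hasBoundedOverlap_prod (hT : ∀ k, Monotone (T k)) (q : ι → ℕ) :
    HasBoundedOverlap volume
      (fun (j : ι → ℤ) (x : ι → ℝ) => ∏ k, Bspl (T k) (q k) (j k) (x k)) 1 := by
  simpa only [Finset.prod_const_one, ← volume_pi] using
    HasBoundedOverlap.pi fun k => hasBoundedOverlap (hT k) (q k)

theorem integral_prod_le (hT : ∀ k, Monotone (T k)) (q : ι → ℕ) (j : ι → ℤ) :
    ∫ x : ι → ℝ, ∏ k, Bspl (T k) (q k) (j k) (x k) ≤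
      ∏ k, (T k (j k) - T k (j k - q k)) := by
  rw [integral_fintype_prod_volume_eq_prod fun k => Bspl (T k) (q k) (j k)]
  exact Finset.prod_le_prod (fun k _ => integral_nonneg (nonneg (hT k) _ _))
    fun k _ => integral_le (hT k) _ _

theorem setIntegral_sq_sum_prod (hT : ∀ k, Monotone (T k)) {S : ι → Set ℝ}
    (hS : ∀ k, (S k).OrdConnected) (hTS : ∀ k l, T k l ∈ S k) (q : ι → ℕ) {J : Type*}
    (s : Finset J) (m : J → ι → ℤ) (θ : J → ℝ) :
    ∫ x in Set.univ.pi S, (∑ j ∈ s, θ j * ∏ k, Bspl (T k) (q k) (m j k) (x k)) ^ 2 =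
      ∫ x : ι → ℝ, (∑ j ∈ s, θ j * ∏ k, Bspl (T k) (q k) (m j k) (x k)) ^ 2 := by
  refine setIntegral_eq_integral_of_forall_compl_eq_zero fun x hx => ?_
  obtain ⟨k, hk⟩ : ∃ k, x k ∉ S k := by simpa [Set.mem_univ_pi] using hx
  refine sq_eq_zero_iff.2 (Finset.sum_eq_zero fun j _ => ?_)
  rw [Finset.prod_eq_zero (Finset.mem_univ k), mul_zero]
  exact eq_zero_of_notMem (hT k) _ _ _ fun h => hk ((hS k).out (hTS k _) (hTS k _) h)

theorem integral_sq_sum_prod_le (hT : ∀ k, Monotone (T k)) (q : ι → ℕ) {J : Type*} (s : Finset J)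
    {m : J → ι → ℤ} (hm : Function.Injective m) (θ : J → ℝ) :
    ∫ x : ι → ℝ, (∑ j ∈ s, θ j * ∏ k, Bspl (T k) (q k) (m j k) (x k)) ^ 2 ≤
      ∑ j ∈ s, θ j ^ 2 * ∏ k, (T k (m j k) - T k (m j k - q k)) := by
  have hb := (hasBoundedOverlap_prod hT q).comp_injective hm
  simpa only [one_mul] using
    hb.integral_sq_sum_le (fun j x => (abs_of_nonneg (hb.nonneg j x)).le)
      (fun j => integral_prod_le hT q (m j)) zero_le_one s θ

theorem exists_mul_sum_le_integral_sq_sum_prod {q : ι → ℕ} (hq : ∀ k, 1 ≤ q k) :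
    ∃ c : ℝ, 0 < c ∧ c ≤ 1 ∧ ∀ T : ι → ℤ → ℝ, (∀ k, Monotone (T k)) →
      ∀ {J : Type*} (s : Finset J) {m : J → ι → ℤ}, Function.Injective m → ∀ θ : J → ℝ,
        c * ∑ j ∈ s, θ j ^ 2 * ∏ k, (T k (m j k) - T k (m j k - q k)) ≤
          ∫ x : ι → ℝ, (∑ j ∈ s, θ j * ∏ k, Bspl (T k) (q k) (m j k) (x k)) ^ 2 := by
  choose κ hκ hκ1 hdual using fun k => exists_biorthogonal (hq k)
  have hκpos : 0 < ∏ k, κ k := Finset.prod_pos fun k _ => hκ k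
  have hκle : (∏ k, κ k) ^ 2 ≤ 1 :=
    pow_le_one₀ hκpos.le (Finset.prod_le_one (fun k _ => (hκ k).le) fun k _ => hκ1 k)
  have hQ : (1 : ℝ) ≤ ∏ k, (q k : ℝ) := Finset.one_le_prod fun k _ => Nat.one_le_cast.2 (hq k)
  have hQpos := one_pos.trans_le hQ
  refine ⟨(∏ k, κ k) ^ 2 / ∏ k, (q k : ℝ), by positivity,
    div_le_one_of_le₀ (hκle.trans hQ) hQpos.le, fun T hT J s m hm θ => ?_⟩
  choose H hH hHb hBH using fun k => hdual k (T k) (hT k)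
  have hb := (HasBoundedOverlap.pi fun k =>
    hasBoundedOverlap_indicator_Ico_knots (hT k) (q k)).comp_injective hm
  have hBH' := (IsBiorthogonal.pi hBH).comp_injective hm
  have hB := (hasBoundedOverlap_prod hT q).comp_injective hm
  simp only [Finset.prod_mul_distrib] at hBH'
  rw [div_mul_eq_mul_div, div_le_iff₀' hQpos]
  refine hBH'.sq_mul_sum_le hb (fun j => ?_) (fun j => ?_) (fun j x => ?_) (fun j => ?_) hQpos s θ
  · exact hB.memLp_two_of_abs_le (measurable_prod T q _).aestronglyMeasurable
      fun x => (abs_of_nonneg (hB.nonneg j x)).le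
  · exact (Finset.measurable_fun_prod _ fun k _ =>
      (hH k (m j k)).comp (measurable_pi_apply k)).aestronglyMeasurable
  · rw [Finset.abs_prod]
    exact Finset.prod_le_prod (fun _ _ => abs_nonneg _) fun k _ => hHb k (m j k) (x k)
  · rw [← volume_pi, integral_fintype_prod_volume_eq_prod]
    exact (Finset.prod_congr rfl fun k _ =>
      integral_indicator_Ico_knots (hT k) (q k) (m j k)).le

end Bspl

end TensorProduct

theorem statement15_general {ι : Type*} [Fintype ι] {q : ι → ℕ} (hq : ∀ k, 1 ≤ q k) :
    ∃ c : ℝ, 0 < c ∧ c ≤ 1 ∧ ∀ (T : ι → ℤ → ℝ) (S : ι → Set ℝ), (∀ k, Monotone (T k)) →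
      (∀ k, (S k).OrdConnected) → (∀ k l, T k l ∈ S k) →
      ∀ {J : Type*} (s : Finset J) {m : J → ι → ℤ}, Function.Injective m → ∀ θ : J → ℝ,
        c * ∑ j ∈ s, θ j ^ 2 * ∏ k, (T k (m j k) - T k (m j k - q k)) ≤
          ∫ x in Set.univ.pi S, (∑ j ∈ s, θ j * ∏ k, Bspl (T k) (q k) (m j k) (x k)) ^ 2 ∧
        ∫ x in Set.univ.pi S, (∑ j ∈ s, θ j * ∏ k, Bspl (T k) (q k) (m j k) (x k)) ^ 2 ≤
          ∑ j ∈ s, θ j ^ 2 * ∏ k, (T k (m j k) - T k (m j k - q k)) := by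
  obtain ⟨c, hc, hc1, lower⟩ := Bspl.exists_mul_sum_le_integral_sq_sum_prod hq
  refine ⟨c, hc, hc1, fun T S hT hS hTS J s m hm θ => ?_⟩
  rw [Bspl.setIntegral_sq_sum_prod hT hS hTS]
  exact ⟨lower T hT s hm θ, Bspl.integral_sq_sum_prod_le hT q s hm θ⟩

/-- There is a constant `c ∈ (0,1]` depending only on `q` and `d` such
that every tensor-product spline `f = Σ_j θ_j Π_k B_{j_k,q_k}` satisfies
`c Σ_j θ_j² Π_k (t_{k,j_k} − t_{k,j_k−q_k}) ≤ ∫_{[0,1]^d} f² ≤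
Σ_j θ_j² Π_k (t_{k,j_k} − t_{k,j_k−q_k})`. -/
theorem statement15 (d : ℕ) (hd : 1 ≤ d) (q : Fin d → ℕ) (hq : ∀ k, 1 ≤ q k) :
    ∃ c : ℝ, 0 < c ∧ c ≤ 1 ∧
      ∀ (ks : Fin d → KnotSeq) (θ : ((k : Fin d) → Fin ((ks k).N + q k)) → ℝ),
        c * ∑ j, θ j ^ 2 * ∏ k, ((ks k).T (((j k : ℕ) : ℤ) + 1) -
              (ks k).T (((j k : ℕ) : ℤ) + 1 - q k)) ≤
          (∫ x in Set.univ.pi fun _ : Fin d => Set.Icc (0 : ℝ) 1,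
            (∑ j, θ j * ∏ k, Bspl (ks k).T (q k) (((j k : ℕ) : ℤ) + 1) (x k)) ^ 2) ∧
        (∫ x in Set.univ.pi fun _ : Fin d => Set.Icc (0 : ℝ) 1,
            (∑ j, θ j * ∏ k, Bspl (ks k).T (q k) (((j k : ℕ) : ℤ) + 1) (x k)) ^ 2) ≤
          ∑ j, θ j ^ 2 * ∏ k, ((ks k).T (((j k : ℕ) : ℤ) + 1) -
              (ks k).T (((j k : ℕ) : ℤ) + 1 - q k)) := by
  obtain ⟨c, hc, hc1, h⟩ := statement15_general hq
  refine ⟨c, hc, hc1, fun ks θ => h (fun k => (ks k).T) (fun _ => Set.Icc 0 1)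
    (fun k => (ks k).T_monotone) (fun _ => Set.ordConnected_Icc) (fun k => (ks k).T_mem_Icc)
    Finset.univ (fun i j hij => funext fun k => ?_) θ⟩
  simpa [Fin.ext_iff] using congrFun hij k
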